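/- arXiv:2307.02904 — 3 statements merged into one kernel-verified Lean document; each statement's English description precedes it below -/
import Mathlib

section
/- Let b ≤ d and b' ≤ d' be real numbers and set η := max(|b − b'|, |d − d'|). Then the Lebesgue measure of the symmetric difference of the triangles T(b,d) and T(b',d') satisfies ω(T(b,d) Δ T(b',d')) ≤ 2(d − b)·η + 2η². -/
open MeasureTheory

/-- The triangular region `T(b,d) = {(x,y) : b ≤ x ≤ y ≤ d}` in the plane. -/
def Tri (b d : ℝ) : Set (ℝ × ℝ) := {q | b ≤ q.1 ∧ q.1 ≤ q.2 ∧ q.2 ≤ d}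

/-!
Both triangles contain `Tri (max b b') (min d d')`, which is their intersection, and are contained
in `Tri (min b b') (max d d')`. With `m` (truncated at `0`) and `M` the leg lengths of these two
triangles, the symmetric difference has area at most `(M - m) (M + m) / 2`, where `M - m ≤ 2η` and
`M + m ≤ 2 (d - b) + 2η`.
-/

lemma measurableSet_tri (b d : ℝ) : MeasurableSet (Tri b d) :=
  (measurableSet_le measurable_const measurable_fst).inter
    ((measurableSet_le measurable_fst measurable_snd).inter
      (measurableSet_le measurable_snd measurable_const))

lemma tri_subset_tri {b d b' d' : ℝ} (hb : b' ≤ b) (hd : d ≤ d') : Tri b d ⊆ Tri b' d' :=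
  fun _ ⟨hbx, hxy, hyd⟩ => ⟨hb.trans hbx, hxy, hyd.trans hd⟩

lemma tri_inter_tri (b d b' d' : ℝ) : Tri b d ∩ Tri b' d' = Tri (max b b') (min d d') := by
  ext q
  simp only [Tri, Set.mem_inter_iff, Set.mem_ofPred_eq, max_le_iff, le_min_iff]
  tauto

lemma tri_eq_empty {b d : ℝ} (h : d < b) : Tri b d = ∅ :=
  Set.eq_empty_of_forall_notMem fun _ ⟨hbx, hxy, hyd⟩ => h.not_ge (hbx.trans (hxy.trans hyd))

lemma volume_preimage_mk_tri (b d x : ℝ) :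
    volume (Prod.mk x ⁻¹' Tri b d) =
      (Set.Icc b d).indicator (fun x => ENNReal.ofReal (d - x)) x := by
  by_cases hx : x ∈ Set.Icc b d
  · have slice_eq : Prod.mk x ⁻¹' Tri b d = Set.Icc x d := by
      ext y
      simp [Tri, hx.1]
    rw [slice_eq, Set.indicator_of_mem hx, Real.volume_Icc]
  · have slice_eq : Prod.mk x ⁻¹' Tri b d = ∅ :=
      Set.eq_empty_of_forall_notMem fun _ ⟨hbx, hxy, hyd⟩ => hx ⟨hbx, hxy.trans hyd⟩
    rw [slice_eq, Set.indicator_of_notMem hx, measure_empty]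

lemma volume_tri_of_le {b d : ℝ} (h : b ≤ d) :
    volume (Tri b d) = ENNReal.ofReal ((d - b) ^ 2 / 2) := by
  have integrable : IntegrableOn (fun x => d - x) (Set.Icc b d) :=
    (continuous_const.sub continuous_id).integrableOn_Icc
  have nonneg : 0 ≤ᵐ[volume.restrict (Set.Icc b d)] fun x => d - x :=
    ae_restrict_of_forall_mem measurableSet_Icc fun _ hx => sub_nonneg.2 hx.2
  have integral_eq : ∫ x in Set.Icc b d, (d - x) = (d - b) ^ 2 / 2 := by
    rw [integral_Icc_eq_integral_Ioc, ← intervalIntegral.integral_of_le h,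
      intervalIntegral.integral_comp_sub_left (fun x => x), integral_id]
    ring
  calc volume (Tri b d)
      = ∫⁻ x, volume (Prod.mk x ⁻¹' Tri b d) := Measure.prod_apply (measurableSet_tri b d)
    _ = ∫⁻ x in Set.Icc b d, ENNReal.ofReal (d - x) := by
      simp_rw [volume_preimage_mk_tri, lintegral_indicator measurableSet_Icc]
    _ = ENNReal.ofReal ((d - b) ^ 2 / 2) := by
      rw [← ofReal_integral_eq_lintegral_ofReal integrable nonneg, integral_eq]

lemma volume_tri (b d : ℝ) : volume (Tri b d) = ENNReal.ofReal (max (d - b) 0 ^ 2 / 2) := by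
  rcases le_or_gt b d with h | h
  · rw [volume_tri_of_le h, max_eq_left (sub_nonneg.2 h)]
  · simp [tri_eq_empty h, h.le]

lemma symmDiff_tri_subset (b d b' d' : ℝ) :
    symmDiff (Tri b d) (Tri b' d') ⊆
      Tri (min b b') (max d d') \ Tri (max b b') (min d d') := by
  rw [symmDiff_eq_sup_sdiff_inf, ← tri_inter_tri]
  exact Set.sdiff_subset_sdiff_left <| Set.union_subset
    (tri_subset_tri (min_le_left b b') (le_max_left d d'))
    (tri_subset_tri (min_le_right b b') (le_max_right d d'))

lemma volume_tri_diff_tri {b d b' d' : ℝ} (hb : b' ≤ b) (hd : d ≤ d') :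
    volume (Tri b' d' \ Tri b d) =
      ENNReal.ofReal ((max (d' - b') 0 ^ 2 - max (d - b) 0 ^ 2) / 2) := by
  have finite : volume (Tri b d) ≠ ⊤ := volume_tri b d ▸ ENNReal.ofReal_ne_top
  rw [measure_sdiff (tri_subset_tri hb hd) (measurableSet_tri b d).nullMeasurableSet finite,
    volume_tri, volume_tri, ← ENNReal.ofReal_sub _ (by positivity), sub_div]

lemma sq_hull_sub_sq_inter_le {b d b' d' η : ℝ} (h : b ≤ d) (hb : |b - b'| ≤ η)
    (hd : |d - d'| ≤ η) :
    max (max d d' - min b b') 0 ^ 2 - max (min d d' - max b b') 0 ^ 2 ≤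
      2 * (2 * (d - b) * η + 2 * η ^ 2) := by
  set M := max (max d d' - min b b') 0
  set m := max (min d d' - max b b') 0
  have hη : 0 ≤ η := (abs_nonneg _).trans hb
  have hM : M = max d d' - min b b' :=
    max_eq_left (sub_nonneg.2 ((min_le_left b b').trans (h.trans (le_max_left d d'))))
  have sub_le : M - m ≤ 2 * η := by
    have hm : min d d' - max b b' ≤ m := le_max_left _ _
    linarith [hm, max_sub_min_eq_abs' b b', max_sub_min_eq_abs' d d']
  have add_le : M + m ≤ 2 * (d - b) + 2 * η := by
    rcases max_choice (min d d' - max b b') 0 with hm | hm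
    · linarith [max_add_min b b', max_add_min d d', (abs_le.1 hb).2, (abs_le.1 hd).1]
    · have hmax : max d d' ≤ d + η := max_le (by linarith) (by linarith [(abs_le.1 hd).1])
      have hmin : b - η ≤ min b b' := le_min (by linarith) (by linarith [(abs_le.1 hb).2])
      linarith [hmax, hmin]
  calc M ^ 2 - m ^ 2 = (M - m) * (M + m) := by ring
    _ ≤ 2 * η * (2 * (d - b) + 2 * η) :=
      mul_le_mul sub_le add_le (by positivity) (by positivity)
    _ = 2 * (2 * (d - b) * η + 2 * η ^ 2) := by ring

/-- With `η = max(|b − b'|, |d − d'|)`, the Lebesgue measure of the symmetric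
difference of the triangles `T(b,d)` and `T(b',d')` is at most
`2(d − b)·η + 2η²`. -/
theorem stmt_2 (b d b' d' : ℝ) (h : b ≤ d) (h' : b' ≤ d') :
    volume (symmDiff (Tri b d) (Tri b' d'))
      ≤ ENNReal.ofReal
          (2 * (d - b) * max |b - b'| |d - d'| + 2 * (max |b - b'| |d - d'|) ^ 2) := by
  calc volume (symmDiff (Tri b d) (Tri b' d'))
      ≤ volume (Tri (min b b') (max d d') \ Tri (max b b') (min d d')) :=
        measure_mono (symmDiff_tri_subset b d b' d')
    _ = ENNReal.ofReal
          ((max (max d d' - min b b') 0 ^ 2 - max (min d d' - max b b') 0 ^ 2) / 2) :=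
        volume_tri_diff_tri min_le_max min_le_max
    _ ≤ _ := ENNReal.ofReal_le_ofReal <| (div_le_iff₀' two_pos).2 <|
        sq_hull_sub_sq_inter_le h (le_max_left _ _) (le_max_right _ _)
end

section
/- Let b ≤ d and b' ≤ d' be real numbers and set η := max(|b − b'|, |d − d'|). If η ≤ 1, then ω(T(b,d) Δ T(b',d')) ≤ 2(d − b + 1)·η. -/
open MeasureTheory

/-!
Two triangles of this shape meet in a third one, and `Tri b d` has area `L ^ 2 / 2` with leg
`L = (d - b)⁺`. If `L`, `L'` and `M` are the legs of two triangles and of their intersection, the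
symmetric difference has area `(L ^ 2 + L' ^ 2 - 2 * M ^ 2) / 2`. Since `M ≤ L` and `M ≤ L'`, this
is at most `((L - M) + (L' - M)) * (L + L') / 2`. With `η = max |b - b'| |d - d'|` one has
`(L - M) + (L' - M) ≤ |b - b'| + |d - d'| ≤ 2 * η` and, for `b ≤ d`, `L' ≤ L + 2 * η`, so the area
is at most `2 * (L + η) * η`.
-/

theorem measureReal_symmDiff_eq_add_sub_inter {α : Type*} [MeasurableSpace α] {μ : Measure α}
    {s t : Set α} (hs : MeasurableSet s) (ht : MeasurableSet t) (hμs : μ s ≠ ⊤) (hμt : μ t ≠ ⊤) :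
    μ.real (symmDiff s t) = μ.real s + μ.real t - 2 * μ.real (s ∩ t) := by
  have h_left := measureReal_sdiff_add_inter ht hμs
  have h_right := measureReal_sdiff_add_inter hs hμt
  rw [Set.inter_comm] at h_right
  rw [measureReal_symmDiff_eq hs ht hμs hμt]
  linarith

theorem sq_add_sq_sub_two_mul_sq_le {R : Type*} [CommRing R] [PartialOrder R] [IsOrderedRing R]
    {x y z : R} (hx : z ≤ x) (hy : z ≤ y) :
    x ^ 2 + y ^ 2 - 2 * z ^ 2 ≤ ((x - z) + (y - z)) * (x + y) := by
  have h_defect : 0 ≤ (x - z) * (y - z) := mul_nonneg (sub_nonneg.2 hx) (sub_nonneg.2 hy)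
  linear_combination h_defect + h_defect

theorem posPart_sub_posPart_le {G : Type*} [AddCommGroup G] [Lattice G] [AddLeftMono G]
    {x y : G} (h : y ≤ x) : x⁺ - y⁺ ≤ x - y :=
  calc x⁺ - y⁺
    _ = ((x⁺ - x⁻) - (y⁺ - y⁻)) + (x⁻ - y⁻) := by abel
    _ = (x - y) + (x⁻ - y⁻) := by rw [posPart_sub_negPart, posPart_sub_negPart]
    _ ≤ x - y := add_le_of_nonpos_right (sub_nonpos.2 (negPart_anti h))

namespace Tri

variable (b d b' d' : ℝ)

theorem isClosed : IsClosed (Tri b d) :=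
  (isClosed_le continuous_const continuous_fst).inter
    ((isClosed_le continuous_fst continuous_snd).inter
      (isClosed_le continuous_snd continuous_const))

theorem measurableSet : MeasurableSet (Tri b d) :=
  (isClosed b d).measurableSet

theorem inter_eq : Tri b d ∩ Tri b' d' = Tri (max b b') (min d d') := by
  ext q
  simp only [Tri, Set.mem_inter_iff, Set.mem_ofPred_eq, max_le_iff, le_min_iff]
  tauto

theorem volume_preimage_mk (x : ℝ) :
    volume (Prod.mk x ⁻¹' Tri b d) =
      (Set.Icc b d).indicator (fun x ↦ ENNReal.ofReal (d - x)) x := by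
  by_cases hx : x ∈ Set.Icc b d
  · have h_section : Prod.mk x ⁻¹' Tri b d = Set.Icc x d := by
      ext y
      simp [Tri, hx.1]
    rw [h_section, Real.volume_Icc, Set.indicator_of_mem hx]
  · have h_section : Prod.mk x ⁻¹' Tri b d = ∅ :=
      Set.eq_empty_of_forall_notMem fun _ hy ↦ hx ⟨hy.1, hy.2.1.trans hy.2.2⟩
    rw [h_section, measure_empty, Set.indicator_of_notMem hx]

theorem volume_eq_lintegral :
    volume (Tri b d) = ∫⁻ x in Set.Icc b d, ENNReal.ofReal (d - x) := by
  rw [Measure.volume_eq_prod, Measure.prod_apply (measurableSet b d),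
    ← lintegral_indicator measurableSet_Icc]
  exact lintegral_congr (volume_preimage_mk b d)

theorem volume_eq : volume (Tri b d) = ENNReal.ofReal ((d - b)⁺ ^ 2 / 2) := by
  rw [volume_eq_lintegral]
  rcases le_total b d with hbd | hdb
  · have h_integral : ∫ x in Set.Icc b d, (d - x) = (d - b) ^ 2 / 2 := by
      rw [integral_Icc_eq_integral_Ioc, ← intervalIntegral.integral_of_le hbd,
        intervalIntegral.integral_comp_sub_left (fun x ↦ x), integral_id]
      ring
    have h_integrable : IntegrableOn (fun x ↦ d - x) (Set.Icc b d) :=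
      (continuous_const.sub continuous_id).continuousOn.integrableOn_Icc
    have h_nonneg : 0 ≤ᵐ[volume.restrict (Set.Icc b d)] fun x ↦ d - x :=
      ae_restrict_of_forall_mem measurableSet_Icc fun _ hx ↦ sub_nonneg.2 hx.2
    rw [← ofReal_integral_eq_lintegral_ofReal h_integrable h_nonneg, h_integral,
      posPart_of_nonneg (sub_nonneg.2 hbd)]
  · have h_null : volume (Set.Icc b d) = 0 := by
      rw [Real.volume_Icc, ENNReal.ofReal_eq_zero]
      exact sub_nonpos.2 hdb
    rw [setLIntegral_measure_zero _ _ h_null, posPart_of_nonpos (sub_nonpos.2 hdb)]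
    simp

theorem volume_ne_top : volume (Tri b d) ≠ ⊤ := by
  rw [volume_eq]
  exact ENNReal.ofReal_ne_top

theorem measureReal_eq : volume.real (Tri b d) = (d - b)⁺ ^ 2 / 2 := by
  rw [measureReal_def, volume_eq, ENNReal.toReal_ofReal (by positivity)]

theorem measureReal_symmDiff :
    volume.real (symmDiff (Tri b d) (Tri b' d')) =
      ((d - b)⁺ ^ 2 + (d' - b')⁺ ^ 2 - 2 * (min d d' - max b b')⁺ ^ 2) / 2 := by
  rw [measureReal_symmDiff_eq_add_sub_inter (measurableSet b d) (measurableSet b' d')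
    (volume_ne_top b d) (volume_ne_top b' d'), inter_eq]
  simp only [measureReal_eq]
  ring

theorem measureReal_symmDiff_le :
    volume.real (symmDiff (Tri b d) (Tri b' d')) ≤
      (|b - b'| + |d - d'|) * ((d - b)⁺ + (d' - b')⁺) / 2 := by
  set m := min d d' - max b b'
  have h_left : m ≤ d - b := sub_le_sub (min_le_left d d') (le_max_left b b')
  have h_right : m ≤ d' - b' := sub_le_sub (min_le_right d d') (le_max_right b b')
  have h_legs : ((d - b)⁺ - m⁺) + ((d' - b')⁺ - m⁺) ≤ |b - b'| + |d - d'| :=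
    calc ((d - b)⁺ - m⁺) + ((d' - b')⁺ - m⁺)
      _ ≤ ((d - b) - m) + ((d' - b') - m) :=
        add_le_add (posPart_sub_posPart_le h_left) (posPart_sub_posPart_le h_right)
      _ = |b - b'| + |d - d'| := by
        linarith [max_sub_min_eq_abs' b b', max_sub_min_eq_abs' d d',
          min_add_max b b', min_add_max d d']
  calc volume.real (symmDiff (Tri b d) (Tri b' d'))
    _ = ((d - b)⁺ ^ 2 + (d' - b')⁺ ^ 2 - 2 * m⁺ ^ 2) / 2 := measureReal_symmDiff b d b' d'
    _ ≤ (((d - b)⁺ - m⁺) + ((d' - b')⁺ - m⁺)) * ((d - b)⁺ + (d' - b')⁺) / 2 := by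
      gcongr
      exact sq_add_sq_sub_two_mul_sq_le (posPart_mono h_left) (posPart_mono h_right)
    _ ≤ (|b - b'| + |d - d'|) * ((d - b)⁺ + (d' - b')⁺) / 2 := by gcongr

end Tri

theorem stmt_3_general (b d b' d' : ℝ) (h : b ≤ d) :
    volume (symmDiff (Tri b d) (Tri b' d')) ≤
      ENNReal.ofReal
        (2 * (d - b + max |b - b'| |d - d'|) * max |b - b'| |d - d'|) := by
  set η := max |b - b'| |d - d'|
  have hb : |b - b'| ≤ η := le_max_left _ _
  have hd : |d - d'| ≤ η := le_max_right _ _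
  have h_leg : (d - b)⁺ = d - b := posPart_of_nonneg (sub_nonneg.2 h)
  have h_leg' : (d' - b')⁺ ≤ d - b + 2 * η := by
    rw [posPart_def]
    exact sup_le (by linarith [le_abs_self (b - b'), neg_abs_le (d - d')])
      (by linarith [abs_nonneg (b - b')])
  have h_finite : volume (symmDiff (Tri b d) (Tri b' d')) ≠ ⊤ :=
    measure_symmDiff_ne_top (Tri.volume_ne_top b d) (Tri.volume_ne_top b' d')
  rw [← ofReal_measureReal h_finite]
  refine ENNReal.ofReal_le_ofReal ?_
  calc volume.real (symmDiff (Tri b d) (Tri b' d'))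
    _ ≤ (|b - b'| + |d - d'|) * ((d - b)⁺ + (d' - b')⁺) / 2 :=
      Tri.measureReal_symmDiff_le b d b' d'
    _ ≤ (η + η) * ((d - b) + (d - b + 2 * η)) / 2 := by
      rw [h_leg]
      gcongr
    _ = 2 * (d - b + η) * η := by ring

/-- With `η = max(|b − b'|, |d − d'|) ≤ 1`, the Lebesgue measure of the symmetric
difference of the triangles `T(b,d)` and `T(b',d')` is at most `2(d − b + 1)·η`. -/
theorem stmt_3 (b d b' d' : ℝ) (h : b ≤ d) (h' : b' ≤ d')
    (hη : max |b - b'| |d - d'| ≤ 1) :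
    volume (symmDiff (Tri b d) (Tri b' d'))
      ≤ ENNReal.ofReal (2 * (d - b + 1) * max |b - b'| |d - d'|) :=
  (stmt_3_general b d b' d' h).trans (ENNReal.ofReal_le_ofReal (by gcongr))
end

section
/- Let b < d be real numbers, let 0 < ε < 1 and let p ≥ 2 be a real number. Then ω(T(b−ε, d+ε) Δ T(b,d)) = 2(d − b)·ε + 2ε² > 2(d − b + 1)·ε^p. In particular, the constant C(b,d) = 2(d − b + 1) cannot bound ω(T(b,d) Δ T(b',d')) by C(b,d) times the p-th power of the ℓ∞ distance max(|b − b'|, |d − d'|) for any exponent p ≥ 2, so no Lipschitz-type stability of the L^p norm of rank functions with respect to the bottleneck distance is possible for p ≥ 2. -/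
open MeasureTheory

/-!
The triangles are nested, so the area of their symmetric difference is the difference of the areas
`(d - b + 2ε)² / 2` and `(d - b)² / 2` of two right isosceles triangles. The strict inequality
compares termwise: `ε ^ p < ε` in the term carrying `d - b > 0`, and `ε ^ p ≤ ε ^ 2` in the other.
-/

open Set

section Triangle

variable {b d b' d' : ℝ}

theorem Tri_subset_Tri (hb : b' ≤ b) (hd : d ≤ d') : Tri b d ⊆ Tri b' d' :=
  fun _ ⟨hbx, hxy, hyd⟩ ↦ ⟨hb.trans hbx, hxy, hyd.trans hd⟩

theorem isClosed_Tri (b d : ℝ) : IsClosed (Tri b d) :=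
  (isClosed_le continuous_const continuous_fst).inter <|
    (isClosed_le continuous_fst continuous_snd).inter <|
      isClosed_le continuous_snd continuous_const

theorem prodMk_preimage_Tri_of_mem {x : ℝ} (hx : x ∈ Icc b d) :
    Prod.mk x ⁻¹' Tri b d = Icc x d :=
  Set.ext fun _ ↦ and_iff_right hx.1

theorem prodMk_preimage_Tri_of_notMem {x : ℝ} (hx : x ∉ Icc b d) :
    Prod.mk x ⁻¹' Tri b d = ∅ :=
  eq_empty_of_forall_notMem fun _ ⟨hbx, hxy, hyd⟩ ↦ hx ⟨hbx, hxy.trans hyd⟩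

theorem volume_prodMk_preimage_Tri (b d x : ℝ) :
    volume (Prod.mk x ⁻¹' Tri b d) =
      (Icc b d).indicator (fun t ↦ ENNReal.ofReal (d - t)) x := by
  by_cases hx : x ∈ Icc b d
  · rw [prodMk_preimage_Tri_of_mem hx, Real.volume_Icc, indicator_of_mem hx]
  · rw [prodMk_preimage_Tri_of_notMem hx, measure_empty, indicator_of_notMem hx]

theorem setLIntegral_Icc_ofReal_sub (h : b ≤ d) :
    ∫⁻ x in Icc b d, ENNReal.ofReal (d - x) = ENNReal.ofReal ((d - b) ^ 2 / 2) := by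
  have integrable_sub : IntegrableOn (fun x ↦ d - x) (Icc b d) :=
    (continuous_const.sub continuous_id).integrableOn_Icc
  have sub_nonneg_ae : 0 ≤ᵐ[volume.restrict (Icc b d)] fun x ↦ d - x :=
    (ae_restrict_mem measurableSet_Icc).mono fun _ hx ↦ sub_nonneg.2 hx.2
  have integral_sub : ∫ x in b..d, (d - x) = (d - b) ^ 2 / 2 := by
    simp [intervalIntegral.integral_comp_sub_left (fun x ↦ x) d]
  rw [← ofReal_integral_eq_lintegral_ofReal integrable_sub sub_nonneg_ae,
    integral_Icc_eq_integral_Ioc, ← intervalIntegral.integral_of_le h, integral_sub]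

theorem volume_Tri (h : b ≤ d) : volume (Tri b d) = ENNReal.ofReal ((d - b) ^ 2 / 2) :=
  calc
    volume (Tri b d) = ∫⁻ x, volume (Prod.mk x ⁻¹' Tri b d) :=
      Measure.prod_apply (isClosed_Tri b d).measurableSet
    _ = ∫⁻ x in Icc b d, ENNReal.ofReal (d - x) := by
      simp only [volume_prodMk_preimage_Tri, lintegral_indicator measurableSet_Icc]
    _ = ENNReal.ofReal ((d - b) ^ 2 / 2) := setLIntegral_Icc_ofReal_sub h

theorem volume_symmDiff_Tri (hb : b' ≤ b) (h : b ≤ d) (hd : d ≤ d') :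
    volume (symmDiff (Tri b' d') (Tri b d)) =
      ENNReal.ofReal (((d' - b') ^ 2 - (d - b) ^ 2) / 2) := by
  have nested : Tri b d ⊆ Tri b' d' := Tri_subset_Tri hb hd
  have finite : volume (Tri b d) ≠ ⊤ := volume_Tri h ▸ ENNReal.ofReal_ne_top
  rw [symmDiff_of_ge nested,
    measure_sdiff nested (isClosed_Tri b d).nullMeasurableSet finite,
    volume_Tri h, volume_Tri (hb.trans (h.trans hd)), ← ENNReal.ofReal_sub _ (by positivity),
    ← sub_div]

end Triangle

theorem add_one_mul_rpow_lt_mul_add_sq {c x p : ℝ} (hc : 0 < c) (hx0 : 0 < x) (hx1 : x < 1)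
    (hp : 2 ≤ p) : (c + 1) * x ^ p < c * x + x ^ 2 := by
  have rpow_lt_self : x ^ p < x := Real.rpow_lt_self_of_lt_one hx0 hx1 (by linarith)
  have rpow_le_sq : x ^ p ≤ x ^ 2 :=
    (Real.rpow_le_rpow_of_exponent_ge hx0 hx1.le hp).trans_eq (Real.rpow_two x)
  calc
    (c + 1) * x ^ p = c * x ^ p + x ^ p := by ring
    _ < c * x + x ^ 2 := add_lt_add_of_lt_of_le (mul_lt_mul_of_pos_left rpow_lt_self hc) rpow_le_sq

/-- For `b < d`, `0 < ε < 1` and real `p ≥ 2`, the Lebesgue measure of the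
symmetric difference of `T(b−ε, d+ε)` and `T(b,d)` equals `2(d − b)·ε + 2ε²`,
which is strictly greater than `2(d − b + 1)·ε^p`.  Hence the constant
`C(b,d) = 2(d − b + 1)` cannot bound the symmetric-difference area by the `p`-th
power of the `ℓ∞` matching distance: no Lipschitz-type stability for `p ≥ 2`. -/
theorem stmt_5 (b d ε p : ℝ) (hbd : b < d) (hε0 : 0 < ε) (hε1 : ε < 1) (hp : 2 ≤ p) :
    volume (symmDiff (Tri (b - ε) (d + ε)) (Tri b d))
        = ENNReal.ofReal (2 * (d - b) * ε + 2 * ε ^ 2) ∧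
    2 * (d - b) * ε + 2 * ε ^ 2 > 2 * (d - b + 1) * ε ^ p := by
  constructor
  · rw [volume_symmDiff_Tri (by linarith) hbd.le (by linarith)]
    congr 1
    ring
  · linarith [add_one_mul_rpow_lt_mul_add_sq (sub_pos.2 hbd) hε0 hε1 hp]
end
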